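/- arXiv:1211.5118 — 2 statements merged into one kernel-verified Lean document; each statement's English description precedes it below -/
import Mathlib

section
/- If V is a trivial spectrum linear subspace of Mat_n(K), then dim V ≤ n(n−1)/2. -/
/-- A relation on a finite nonempty type in which every element has a successor restricts, on some
nonempty subset, to the graph of a function. -/
lemma exists_finset_existsUnique_of_forall_exists {ι : Type*} [Fintype ι] [Nonempty ι]
    (R : ι → ι → Prop) (hR : ∀ i, ∃ j, R i j) :
    ∃ C : Finset ι, C.Nonempty ∧ ∀ i ∈ C, ∃! j, j ∈ C ∧ R i j := by
  classical
  obtain ⟨C, ⟨hCne, hC⟩, hmin⟩ := WellFounded.has_min (wellFounded_lt (α := Finset ι))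
    {C | C.Nonempty ∧ ∀ i ∈ C, ∃ j ∈ C, R i j}
    ⟨Finset.univ, Finset.univ_nonempty, fun i _ ↦ by simpa using hR i⟩
  have himage (f : ι → ι) (hf : ∀ i ∈ C, f i ∈ C ∧ R i (f i)) : C.image f = C := by
    have hsub : C.image f ⊆ C := Finset.image_subset_iff.2 fun i hi ↦ (hf i hi).1
    by_contra hne
    refine hmin (C.image f) ⟨hCne.image f, fun i hi ↦ ?_⟩ (hsub.lt_of_ne hne)
    exact ⟨f i, Finset.mem_image_of_mem f (hsub hi), (hf i (hsub hi)).2⟩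
  have hinj (f : ι → ι) (hf : ∀ i ∈ C, f i ∈ C ∧ R i (f i)) : Set.InjOn f C :=
    Finset.card_image_iff.1 (by rw [himage f hf])
  have hex : ∀ i, ∃ j, i ∈ C → j ∈ C ∧ R i j := fun i ↦ by
    by_cases hi : i ∈ C
    · obtain ⟨j, hj⟩ := hC i hi
      exact ⟨j, fun _ ↦ hj⟩
    · exact ⟨i, fun h ↦ absurd h hi⟩
  choose f hf using hex
  refine ⟨C, hCne, fun i hi ↦ ⟨f i, hf i hi, fun j ⟨hj, hij⟩ ↦ ?_⟩⟩
  obtain ⟨k, hk, rfl⟩ := Finset.mem_image.1 ((himage f hf).symm ▸ hj)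
  by_contra hne
  have hki : k ≠ i := fun h ↦ hne (h ▸ rfl)
  refine hki (hinj (Function.update f i (f k)) (fun l hl ↦ ?_) hk hi ?_)
  · by_cases hli : l = i
    · subst hli
      simpa using ⟨hj, hij⟩
    · simpa [hli] using hf l hl
  · simp [hki]

/-- A trivial spectrum space contains, for some `i`, no nonzero matrix supported on row `i`. -/
lemma exists_row_eq_zero_of_trivial_spectrum {K ι : Type*} [Field K] [Fintype ι] [Nonempty ι]
    (V : Submodule K (Matrix ι ι K))
    (hV : ∀ N ∈ V, ∀ μ : K, μ ≠ 0 → ∀ x : ι → K, N.mulVec x = μ • x → x = 0) :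
    ∃ i, ∀ N ∈ V, (∀ j ≠ i, N j = 0) → N = 0 := by
  classical
  by_contra! h
  choose N hNV hNrow hN0 using h
  have hent (i : ι) : ∃ j, N i i j ≠ 0 := by
    by_contra! h0
    refine hN0 i (funext fun j ↦ ?_)
    by_cases hj : j = i
    · subst hj
      exact funext h0
    · exact hNrow i j hj
  obtain ⟨C, ⟨c, hc⟩, hC⟩ := exists_finset_existsUnique_of_forall_exists _ hent
  have hsum (i : ι) (hi : i ∈ C) : ∑ j ∈ C, N i i j ≠ 0 := by
    obtain ⟨j, ⟨hj, hij⟩, huniq⟩ := hC i hi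
    rw [Finset.sum_eq_single_of_mem j hj fun k hk hkj ↦ ?_]
    · exact hij
    · by_contra hik
      exact hkj (huniq k ⟨hk, hik⟩)
  have hx := hV (∑ i ∈ C, (∑ j ∈ C, N i i j)⁻¹ • N i)
    (V.sum_mem fun i _ ↦ V.smul_mem _ (hNV i)) 1 one_ne_zero
    (fun j ↦ if j ∈ C then 1 else 0) ?_
  · simpa [hc] using congrFun hx c
  · funext k
    have hmul (i : ι) : (N i).mulVec (fun j ↦ if j ∈ C then 1 else 0) k =
        if k = i then ∑ j ∈ C, N i i j else 0 := by
      by_cases hk : k = i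
      · subst hk
        simp [Matrix.mulVec, dotProduct]
      · simp [Matrix.mulVec, hNrow i k hk, hk]
    rw [one_smul, Matrix.sum_mulVec, Finset.sum_apply]
    simp only [Matrix.smul_mulVec, Pi.smul_apply, hmul, smul_eq_mul, mul_ite, mul_zero,
      Finset.sum_ite_eq]
    split_ifs with hk
    · exact inv_mul_cancel₀ (hsum k hk)
    · rfl

theorem stmt_3 {K : Type*} [Field K] {n : ℕ}
    (V : Submodule K (Matrix (Fin n) (Fin n) K))
    (hV : ∀ N ∈ V, ∀ μ : K, μ ≠ 0 → ∀ x : Fin n → K, N.mulVec x = μ • x → x = 0) :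
    Module.finrank K V ≤ n * (n - 1) / 2 := by
  induction n with
  | zero => simp [Module.finrank_zero_of_subsingleton]
  | succ n ih =>
    obtain ⟨i, hi⟩ := exists_row_eq_zero_of_trivial_spectrum V hV
    let col : V →ₗ[K] (Fin (n + 1) → K) :=
      { toFun := fun N j ↦ N.1 j i
        map_add' := fun _ _ ↦ rfl
        map_smul' := fun _ _ ↦ rfl }
    let minor : LinearMap.ker col →ₗ[K] Matrix (Fin n) (Fin n) K :=
      { toFun := fun N ↦ N.1.1.submatrix i.succAbove i.succAbove
        map_add' := fun _ _ ↦ rfl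
        map_smul' := fun _ _ ↦ rfl }
    have hcol0 (N : LinearMap.ker col) (j : Fin (n + 1)) : N.1.1 j i = 0 := congrFun N.2 j
    have hinj : Function.Injective minor := by
      refine (injective_iff_map_eq_zero _).2 fun N hN ↦ Subtype.ext (Subtype.ext ?_)
      refine hi _ N.1.2 fun j hj ↦ funext fun k ↦ ?_
      obtain ⟨j, rfl⟩ := Fin.exists_succAbove_eq hj
      by_cases hk : k = i
      · subst hk
        exact hcol0 N _
      · obtain ⟨k, rfl⟩ := Fin.exists_succAbove_eq hk
        exact congrFun (congrFun hN j) k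
    have hker : Module.finrank K (LinearMap.ker col) ≤ n * (n - 1) / 2 := by
      rw [← LinearMap.finrank_range_of_inj hinj]
      refine ih _ ?_
      rintro _ ⟨N, rfl⟩ μ hμ y hy
      have hz := hV N.1.1 N.1.2 μ hμ
        (i.insertNth (μ⁻¹ * ∑ k, N.1.1 i (i.succAbove k) * y k) y) ?_
      · funext k
        simpa using congrFun hz (i.succAbove k)
      · have hmul (j : Fin (n + 1)) (a : K) :
            N.1.1.mulVec (i.insertNth (α := fun _ ↦ K) a y) j =
              ∑ k, N.1.1 j (i.succAbove k) * y k := by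
          simp [Matrix.mulVec, dotProduct, Fin.sum_univ_succAbove _ i, hcol0]
        funext j
        rw [hmul]
        by_cases hj : j = i
        · subst hj
          simp [mul_inv_cancel_left₀ hμ]
        · obtain ⟨j, rfl⟩ := Fin.exists_succAbove_eq hj
          have hyj : ∑ k, N.1.1 (i.succAbove j) (i.succAbove k) * y k = μ * y j := congrFun hy j
          simpa using hyj
    have hrange : Module.finrank K (LinearMap.range col) ≤ n := by
      have hlt : LinearMap.range col < ⊤ := by
        refine lt_top_iff_ne_top.2 fun htop ↦ ?_
        obtain ⟨N, hN⟩ := LinearMap.range_eq_top.1 htop (Pi.single i 1)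
        have hz := hV N.1 N.2 1 one_ne_zero (Pi.single i 1) ?_
        · simpa using congrFun hz i
        · rw [Matrix.mulVec_single_one, one_smul]
          exact hN
      have := Submodule.finrank_lt hlt.ne
      rw [Module.finrank_fin_fun] at this
      omega
    have harith : n * (n - 1) / 2 + n = (n + 1) * (n + 1 - 1) / 2 := by
      rw [← Nat.choose_two_right, ← Nat.choose_two_right, Nat.choose_succ_succ' n 1,
        Nat.choose_one_right, add_comm]
    have := col.finrank_range_add_finrank_ker
    omega
end

section
/- If V is a linear subspace of Mat_n(K) consisting of nilpotent matrices, then dim V ≤ n(n−1)/2. (Gerstenhaber dimension bound.) -/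
open Polynomial in
/-- A nilpotent matrix `A` over a field satisfies `det (1 + X A) = 1`. -/
theorem Matrix.det_one_add_X_smul_eq_one_of_isNilpotent {K ι : Type*} [Field K] [Fintype ι]
    [DecidableEq ι] {A : Matrix ι ι K} (hA : IsNilpotent A) :
    (1 + (X : K[X]) • A.map C).det = 1 := by
  have h : (1 + (X : K[X]) • A.map C).det = (-A).charpolyRev := by
    rw [Matrix.charpolyRev]
    congr 1
    ext i j
    simp
  obtain ⟨c, -, hc⟩ := Polynomial.isUnit_iff.mp (isUnit_charpolyRev_of_isNilpotent hA.neg)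
  have h0 := Matrix.eval_charpolyRev (M := -A)
  rw [← hc, eval_C] at h0
  rw [h, ← hc, h0, C_1]

open Polynomial in
/-- If `A`, `B` and `A + B` are nilpotent, then `A * B` has trace zero. -/
theorem Matrix.trace_mul_eq_zero_of_isNilpotent_add {K ι : Type*} [Field K] [Fintype ι]
    [DecidableEq ι] {A B : Matrix ι ι K} (hA : IsNilpotent A) (hB : IsNilpotent B)
    (hAB : IsNilpotent (A + B)) : (A * B).trace = 0 := by
  have dA := det_one_add_X_smul_eq_one_of_isNilpotent hA
  have dB := det_one_add_X_smul_eq_one_of_isNilpotent hB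
  have dAB := det_one_add_X_smul_eq_one_of_isNilpotent hAB
  set P := 1 + (X : K[X]) • A.map C with hP
  set Q := 1 + (X : K[X]) • B.map C with hQ
  have hPQ : 1 + (X : K[X]) • (A + B).map C = P * Q - (X ^ 2 : K[X]) • (A * B).map C := by
    rw [hP, hQ, Matrix.map_mul, Matrix.map_add _ (fun _ _ => C_add)]
    simp only [add_mul, mul_add, one_mul, mul_one, smul_mul_assoc, mul_smul_comm, smul_smul,
      smul_add, sq]
    abel
  set D := P.adjugate * (A * B).map C * Q.adjugate with hD
  have key : P.adjugate * (1 + (X : K[X]) • (A + B).map C) * Q.adjugate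
      = 1 + (X ^ 2 : K[X]) • (-D) := by
    have hp : P.adjugate * P = 1 := by rw [adjugate_mul, dA, one_smul]
    have hq : Q * Q.adjugate = 1 := by rw [mul_adjugate, dB, one_smul]
    rw [hPQ, mul_sub, sub_mul, ← mul_assoc, hp, one_mul, hq, hD, mul_smul_comm, smul_mul_assoc,
      smul_neg, sub_eq_add_neg]
  have hdet := congrArg Matrix.det key
  rw [det_mul, det_mul, dAB, det_adjugate, det_adjugate, dA, dB, one_pow, one_mul,
    one_mul, det_one_add_smul, trace_neg] at hdet
  obtain ⟨r, hr⟩ : ∃ r : K[X], 1 = 1 + -D.trace * X ^ 2 + r * (X ^ 2) ^ 2 := ⟨_, hdet⟩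
  have htr : D.trace = r * X ^ 2 := by
    apply mul_right_cancel₀ (pow_ne_zero 2 (X_ne_zero (R := K)))
    linear_combination hr
  have h0 := congrArg (evalRingHom (0 : K)) htr
  have hPe : (evalRingHom (0 : K)).mapMatrix P = 1 := by
    ext i j
    by_cases h : i = j <;> simp [hP, Matrix.one_apply, h]
  have hQe : (evalRingHom (0 : K)).mapMatrix Q = 1 := by
    ext i j
    by_cases h : i = j <;> simp [hQ, Matrix.one_apply, h]
  have hABe : (evalRingHom (0 : K)).mapMatrix ((A * B).map C) = A * B := by
    ext i j
    rw [RingHom.mapMatrix_apply, map_apply, map_apply, coe_evalRingHom, eval_C]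
  have hT : evalRingHom (0 : K) D.trace = ((evalRingHom (0 : K)).mapMatrix D).trace :=
    AddMonoidHom.map_trace (evalRingHom (0 : K)) D
  rw [hT, hD, map_mul, map_mul, RingHom.map_adjugate, RingHom.map_adjugate, hPe, hQe, hABe,
    adjugate_one, one_mul, mul_one] at h0
  simpa using h0

/-- The diagonal of a nilpotent upper triangular matrix over a field vanishes. -/
theorem Matrix.diag_eq_zero_of_isNilpotent_of_upperTriangular {K ι : Type*} [Field K] [Fintype ι]
    [LinearOrder ι] {A : Matrix ι ι K} (hA : IsNilpotent A) (h : A.BlockTriangular id) (i : ι) :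
    A i i = 0 := by
  have hc : A.charpoly = Polynomial.X ^ Fintype.card ι :=
    sub_eq_zero.mp (isNilpotent_charpoly_sub_pow_of_isNilpotent hA).eq_zero
  rw [charpoly_of_isUpperTriangular A h] at hc
  have he := congrArg (Polynomial.eval (A i i)) hc
  rw [Polynomial.eval_prod, Finset.prod_eq_zero (Finset.mem_univ i) (by simp)] at he
  exact eq_zero_of_pow_eq_zero (n := Fintype.card ι) (by simpa using he.symm)

/-- The positions strictly below the diagonal of an `n × n` matrix. -/
abbrev StrictLowerIndex (n : ℕ) : Type := Σ i : Fin n, {j : Fin n // j < i}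

theorem card_strictLowerIndex (n : ℕ) :
    Fintype.card (StrictLowerIndex n) = n * (n - 1) / 2 := by
  rw [Fintype.card_sigma, ← Finset.sum_range_id, ← Fin.sum_univ_eq_sum_range (fun i => i)]
  exact Finset.sum_congr rfl fun i _ => by
    rw [Fintype.card_subtype, ← Fin.card_Iio]
    congr 1
    ext
    simp

/-- The entries of a matrix strictly below the diagonal. -/
def Matrix.strictLower (K : Type*) [Field K] (n : ℕ) :
    Matrix (Fin n) (Fin n) K →ₗ[K] (StrictLowerIndex n → K) where
  toFun A p := A p.1 p.2
  map_add' _ _ := rfl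
  map_smul' _ _ := rfl

theorem Matrix.strictLower_apply {K : Type*} [Field K] {n : ℕ}
    (A : Matrix (Fin n) (Fin n) K) (p : StrictLowerIndex n) :
    strictLower K n A p = A p.1 p.2 := rfl

/-- If `A` vanishes on and below the diagonal, the trace of `A * B` only involves the entries
of `B` strictly below the diagonal. -/
theorem Matrix.strictLower_transpose_dotProduct {K : Type*} [Field K] {n : ℕ}
    {A : Matrix (Fin n) (Fin n) K} (hA : ∀ i j, j ≤ i → A i j = 0)
    (B : Matrix (Fin n) (Fin n) K) :
    dotProduct (strictLower K n A.transpose) (strictLower K n B) = (A * B).trace := by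
  rw [trace_mul_comm]
  simp only [dotProduct, strictLower_apply, Fintype.sum_sigma, trace, diag_apply, mul_apply,
    transpose_apply]
  refine Finset.sum_congr rfl fun i _ => ?_
  rw [← Finset.sum_subtype (Finset.univ.filter (· < i)) (by simp) (fun j => A j i * B i j),
    Finset.sum_filter]
  refine Finset.sum_congr rfl fun j _ => ?_
  split_ifs with h
  · exact mul_comm _ _
  · rw [hA j i (not_lt.mp h), mul_zero]

theorem stmt_4 {K : Type*} [Field K] {n : ℕ}
    (V : Submodule K (Matrix (Fin n) (Fin n) K))
    (hnil : ∀ N ∈ V, N ^ n = 0) :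
    Module.finrank K V ≤ n * (n - 1) / 2 := by
  have nil : ∀ N ∈ V, IsNilpotent N := fun N hN => ⟨n, hnil N hN⟩
  let f : V →ₗ[K] (StrictLowerIndex n → K) := Matrix.strictLower K n ∘ₗ V.subtype
  have hker : ∀ A : LinearMap.ker f, ∀ i j, j ≤ i → (A : V).1 i j = 0 := by
    intro A
    have lower : ∀ i j, j < i → (A : V).1 i j = 0 := fun i j hij =>
      congrFun (LinearMap.mem_ker.mp A.2) ⟨i, j, hij⟩
    intro i j hij
    rcases hij.lt_or_eq with h | rfl
    · exact lower i j h
    · exact Matrix.diag_eq_zero_of_isNilpotent_of_upperTriangular (nil _ A.1.2)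
        (fun i j h => lower i j h) j
  let u : LinearMap.ker f →ₗ[K] (StrictLowerIndex n → K) :=
    Matrix.strictLower K n ∘ₗ (Matrix.transposeLinearEquiv (Fin n) (Fin n) K K).toLinearMap ∘ₗ
      V.subtype ∘ₗ (LinearMap.ker f).subtype
  have hu : Function.Injective u := by
    intro A B hAB
    ext i j
    rcases le_or_gt j i with h | h
    · exact (hker A i j h).trans (hker B i j h).symm
    · exact congrFun hAB ⟨j, i, h⟩
  let g : LinearMap.ker f →ₗ[K] Module.Dual K (StrictLowerIndex n → K) :=
    (dotProductEquiv K (StrictLowerIndex n)).toLinearMap ∘ₗ u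
  have hg : ∀ A, g A ∈ (LinearMap.range f).dualAnnihilator := by
    intro A
    rw [Submodule.mem_dualAnnihilator]
    rintro _ ⟨B, rfl⟩
    exact (Matrix.strictLower_transpose_dotProduct (hker A) B.1).trans
      (Matrix.trace_mul_eq_zero_of_isNilpotent_add (nil _ A.1.2) (nil _ B.2)
        (nil _ (V.add_mem A.1.2 B.2)))
  have hle := LinearMap.finrank_le_finrank_of_injective
    (f := g.codRestrict (LinearMap.range f).dualAnnihilator hg)
    (fun _ _ h => hu ((dotProductEquiv K (StrictLowerIndex n)).injective
      (congrArg Subtype.val h)))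
  have h1 := f.finrank_range_add_finrank_ker
  have h2 := Subspace.finrank_add_finrank_dualAnnihilator_eq (LinearMap.range f)
  rw [Module.finrank_fintype_fun_eq_card, card_strictLowerIndex] at h2
  omega
end
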